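/- (Leibniz type rule for the classical Caputo derivative.) Let 0 < α < 1 and a < b. Suppose f, g : ℝ → ℝ are real-analytic with everywhere-convergent power series. Then for every x ∈ (a,b): (^{C}D^{α}(f·g))(x) = Σ_{m=0}^∞ binom(α, m) f⁽ᵐ⁾(x) (^{C}D^{α−m} g)(x) + g(a)(f(x) − f(a)) (x − a)^{−α} / Γ(1−α), where f⁽ᵐ⁾ is the ordinary m-th derivative of f and the series converges. -/

import Mathlib

open Real

/-- Generalized binomial coefficient `binom(γ, n) = γ(γ-1)⋯(γ-n+1)/n!`. -/
noncomputable def genBinom (γ : ℝ) (n : ℕ) : ℝ :=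
  (∏ i ∈ Finset.range n, (γ - (i : ℝ))) / (n.factorial : ℝ)

/-- Ψ-Riemann–Liouville fractional integral of order `α` with base point `a`;
by convention the order-0 integral is the identity. -/
noncomputable def psiI (a : ℝ) (Ψ f : ℝ → ℝ) (α : ℝ) (x : ℝ) : ℝ :=
  if α = 0 then f x
  else (Real.Gamma α)⁻¹ * ∫ t in a..x, deriv Ψ t * (Ψ x - Ψ t) ^ (α - 1) * f t

/-- Ψ-Riemann–Liouville fractional derivative of order `γ` (for `γ ≤ 0` it is the
fractional integral of order `-γ`, the order-0 case being the identity). -/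
noncomputable def psiRLD (a : ℝ) (Ψ f : ℝ → ℝ) (γ : ℝ) (x : ℝ) : ℝ :=
  if γ ≤ 0 then psiI a Ψ f (-γ) x
  else (deriv Ψ x)⁻¹ * deriv (fun y => psiI a Ψ f (1 - γ) y) x

/-- Ψ-Caputo fractional derivative of order `γ` (for `γ ≤ 0` it is the
fractional integral of order `-γ`). -/
noncomputable def psiCD (a : ℝ) (Ψ f : ℝ → ℝ) (γ : ℝ) (x : ℝ) : ℝ :=
  if γ ≤ 0 then psiI a Ψ f (-γ) x
  else psiI a Ψ (fun t => (deriv Ψ t)⁻¹ * deriv f t) (1 - γ) x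

/-- Ψ-Hilfer fractional derivative of order `α` and type `β`. -/
noncomputable def psiHD (a : ℝ) (Ψ f : ℝ → ℝ) (α β : ℝ) (x : ℝ) : ℝ :=
  psiI a Ψ
    (fun y => (deriv Ψ y)⁻¹ * deriv (fun z => psiI a Ψ f ((1 - β) * (1 - α)) z) y)
    (β * (1 - α)) x

/-- Classical Riemann–Liouville fractional integral with base point `a`. -/
noncomputable def rlI (a : ℝ) (α : ℝ) (f : ℝ → ℝ) (x : ℝ) : ℝ :=
  if α = 0 then f x
  else (Real.Gamma α)⁻¹ * ∫ t in a..x, (x - t) ^ (α - 1) * f t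

/-- Classical Riemann–Liouville fractional derivative (fractional integral for `γ ≤ 0`). -/
noncomputable def rlD (a : ℝ) (γ : ℝ) (f : ℝ → ℝ) (x : ℝ) : ℝ :=
  if γ ≤ 0 then rlI a (-γ) f x
  else deriv (fun y => rlI a (1 - γ) f y) x

/-- Classical Caputo fractional derivative (fractional integral for `γ ≤ 0`). -/
noncomputable def capD (a : ℝ) (γ : ℝ) (f : ℝ → ℝ) (x : ℝ) : ℝ :=
  if γ ≤ 0 then rlI a (-γ) f x
  else rlI a (1 - γ) (deriv f) x

/-- Classical Hilfer fractional derivative of order `α` and type `β`. -/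
noncomputable def hilD (a : ℝ) (α β : ℝ) (f : ℝ → ℝ) (x : ℝ) : ℝ :=
  rlI a (β * (1 - α))
    (fun y => deriv (fun z => rlI a ((1 - β) * (1 - α)) f z) y) x

/-- Hadamard fractional integral with base point `a`. -/
noncomputable def hadI (a : ℝ) (α : ℝ) (f : ℝ → ℝ) (x : ℝ) : ℝ :=
  if α = 0 then f x
  else (Real.Gamma α)⁻¹ * ∫ t in a..x, (Real.log x - Real.log t) ^ (α - 1) * f t / t

/-- Caputo–Hadamard fractional derivative (Hadamard fractional integral for `γ ≤ 0`). -/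
noncomputable def chD (a : ℝ) (γ : ℝ) (f : ℝ → ℝ) (x : ℝ) : ℝ :=
  if γ ≤ 0 then hadI a (-γ) f x
  else hadI a (1 - γ) (fun t => t * deriv f t) x

/-- `h` is real-analytic with a power series converging on all of `ℝ`. -/
def EntireReal (h : ℝ → ℝ) : Prop :=
  ∃ p : FormalMultilinearSeries ℝ ℝ ℝ, HasFPowerSeriesOnBall h p 0 ⊤

/-!
Write `w t = (x - t) ^ (-α)`. The function `(f - f x) * g` vanishes at `x`, where it equals
`-(x - t) * (dslope f x * g)`, so integrating its derivative against `w` by parts leaves only a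
boundary term at `a` and `α * ∫ w * dslope f x * g`. Expanding `dslope f x` in its Taylor series
at `x` and integrating termwise, the `n`-th term raises the exponent of the kernel by `n` and so
becomes a fractional integral of `g` of order `n + 1 - α`; the Gamma factors combine into
`genBinom α (n + 1)`.
-/

section

open Set MeasureTheory
open scoped Nat

lemma genBinom_zero (γ : ℝ) : genBinom γ 0 = 1 := by
  simp [genBinom]

lemma genBinom_succ (γ : ℝ) (n : ℕ) :
    genBinom γ (n + 1) = genBinom γ n * ((γ - n) / (n + 1)) := by
  simp only [genBinom, Finset.prod_range_succ, Nat.factorial_succ, Nat.cast_mul, Nat.cast_succ]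
  field_simp

-- At the poles of `Gamma` both sides vanish, since there `Gamma s = 0` in Mathlib.
lemma inv_Gamma_eq_mul_inv_Gamma_add_one (s : ℝ) : (Gamma s)⁻¹ = s * (Gamma (s + 1))⁻¹ := by
  rcases eq_or_ne s 0 with rfl | hs
  · simp [Real.Gamma_zero]
  · rw [Real.Gamma_add_one hs, mul_inv, mul_inv_cancel_left₀ hs]

lemma genBinom_mul_inv_Gamma (γ : ℝ) (n : ℕ) :
    genBinom γ n * (Gamma (n - γ))⁻¹ = (-1) ^ n / n ! * (Gamma (-γ))⁻¹ := by
  induction n with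
  | zero => simp [genBinom_zero]
  | succ n ih =>
    rw [inv_Gamma_eq_mul_inv_Gamma_add_one (n - γ), sub_add_eq_add_sub] at ih
    rw [genBinom_succ, Nat.factorial_succ, pow_succ]
    push_cast
    field_simp at ih ⊢
    linear_combination -ih

lemma intervalIntegrable_sub_rpow {r : ℝ} (hr : -1 < r) (a b x : ℝ) :
    IntervalIntegrable (fun t => (x - t) ^ r) volume a b := by
  have := intervalIntegral.intervalIntegrable_rpow' (a := x - a) (b := x - b) hr
  simpa using this.comp_sub_left x

lemma integral_sub_rpow_mul_deriv_sub_mul {a x r : ℝ} (hax : a ≤ x) (hr : -1 < r) {v u' : ℝ → ℝ}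
    (hv : ContinuousOn v (Icc a x))
    (hu : ∀ t ∈ Ioo a x, HasDerivAt (fun s => (x - s) * v s) (u' t) t)
    (hu' : IntervalIntegrable (fun t => (x - t) ^ r * u' t) volume a x) :
    ∫ t in a..x, (x - t) ^ r * u' t =
      r * (∫ t in a..x, (x - t) ^ r * v t) - (x - a) ^ (r + 1) * v a := by
  have hvi : IntervalIntegrable (fun t => (x - t) ^ r * v t) volume a x :=
    (intervalIntegrable_sub_rpow hr a x x).mul_continuousOn (by rwa [uIcc_of_le hax])
  have hcont : ContinuousOn (fun t => (x - t) ^ (r + 1) * v t) (Icc a x) := by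
    refine ContinuousOn.mul (Continuous.continuousOn ?_) hv
    exact Continuous.rpow_const (by fun_prop) fun t => Or.inr (by linarith)
  have hderiv : ∀ t ∈ Ioo a x, HasDerivAt (fun t => (x - t) ^ (r + 1) * v t)
      ((x - t) ^ r * u' t - r * ((x - t) ^ r * v t)) t := by
    intro t ht
    have hsplit : ∀ s < x, (x - s) ^ (r + 1) * v s = (x - s) ^ r * ((x - s) * v s) := by
      intro s hs
      rw [Real.rpow_add_one (sub_pos.2 hs).ne', mul_assoc]
    have hkernel : HasDerivAt (fun s => (x - s) ^ r) (-1 * r * (x - t) ^ (r - 1)) t :=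
      ((hasDerivAt_id t).const_sub x).rpow_const (Or.inl (sub_pos.2 ht.2).ne')
    refine ((hkernel.mul (hu t ht)).congr_of_eventuallyEq ?_).congr_deriv ?_
    · filter_upwards [Iio_mem_nhds ht.2] with s hs using hsplit s hs
    · have hpow : (x - t) ^ r = (x - t) ^ (r - 1) * (x - t) := by
        rw [← Real.rpow_add_one (sub_pos.2 ht.2).ne', sub_add_cancel]
      linear_combination r * v t * hpow
  have hFTC := intervalIntegral.integral_eq_sub_of_hasDerivAt_of_le hax hcont hderiv
    (hu'.sub (hvi.const_mul r))
  rw [intervalIntegral.integral_sub hu' (hvi.const_mul r), intervalIntegral.integral_const_mul,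
    sub_self, Real.zero_rpow (by linarith)] at hFTC
  linarith

lemma hasSum_integral_sub_pow_smul {E : Type*} [NormedAddCommGroup E] [NormedSpace ℝ E]
    {a x : ℝ} {c : ℕ → ℝ} {S : ℝ → ℝ} {w : ℝ → E} (hw : IntervalIntegrable w volume a x)
    (hS : ∀ t ∈ uIcc a x, HasSum (fun n => (t - x) ^ n * c n) (S t)) :
    HasSum (fun n => c n • ∫ t in a..x, (t - x) ^ n • w t) (∫ t in a..x, S t • w t) := by
  simp_rw [← intervalIntegral.integral_smul]
  have hsum : Summable fun n => |(a - x) ^ n * c n| := (hS a left_mem_uIcc).summable.abs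
  refine intervalIntegral.hasSum_integral_of_dominated_convergence
    (fun n t => |(a - x) ^ n * c n| * ‖w t‖) (fun n => ?_) (fun n => ?_) ?_ ?_ ?_
  · have hcont : Continuous fun t => c n * (t - x) ^ n := by fun_prop
    simpa only [smul_smul] using
      (intervalIntegrable_iff.1 (hw.continuousOn_smul hcont.continuousOn)).aestronglyMeasurable
  · refine .of_forall fun t ht => ?_
    have hdist : |t - x| ≤ |a - x| := by
      simpa only [abs_sub_comm] using abs_sub_right_of_mem_uIcc (uIoc_subset_uIcc ht)
    rw [smul_smul, norm_smul, Real.norm_eq_abs, abs_mul, abs_mul, mul_comm |c n|, abs_pow, abs_pow]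
    gcongr
  · exact .of_forall fun t _ => hsum.mul_right _
  · simp_rw [tsum_mul_right]
    exact hw.norm.const_mul _
  · refine .of_forall fun t ht => ?_
    simpa only [smul_smul, mul_comm] using (hS t (uIoc_subset_uIcc ht)).smul_const (w t)

section Dslope

variable {𝕜 E : Type*} [NontriviallyNormedField 𝕜] [NormedAddCommGroup E] [NormedSpace 𝕜 E]
  {f : 𝕜 → E} {x t : 𝕜}

lemma hasSum_taylor_of_hasFPowerSeriesOnBall [CharZero 𝕜] [CompleteSpace E]
    {p : FormalMultilinearSeries 𝕜 𝕜 E} {r : ENNReal} (hf : HasFPowerSeriesOnBall f p x r)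
    (ht : t ∈ Metric.eball x r) :
    HasSum (fun n => (t - x) ^ n • (n ! : 𝕜)⁻¹ • iteratedDeriv n f x) (f t) := by
  have hmem : t - x ∈ Metric.eball 0 r := by
    simpa [Metric.mem_eball, edist_eq_enorm_sub] using ht
  have := hf.hasSum_iteratedFDeriv hmem
  simpa only [iteratedFDeriv_apply_eq_iteratedDeriv_mul_prod, Finset.prod_const, Finset.card_univ,
    Fintype.card_fin, smul_comm _ ((t - x) ^ _), add_sub_cancel] using this

lemma hasSum_taylor_dslope
    (h : HasSum (fun n => (t - x) ^ n • (n ! : 𝕜)⁻¹ • iteratedDeriv n f x) (f t)) :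
    HasSum (fun n => (t - x) ^ n • ((n + 1)! : 𝕜)⁻¹ • iteratedDeriv (n + 1) f x)
      (dslope f x t) := by
  rcases eq_or_ne t x with rfl | htx
  · simpa using HasSum.hasSum_at_zero (𝕜 := 𝕜)
      fun n => ((n + 1)! : 𝕜)⁻¹ • iteratedDeriv (n + 1) f t
  · have h0 : t - x ≠ 0 := sub_ne_zero.2 htx
    have htail := ((hasSum_nat_add_iff' 1).2 h).const_smul (t - x)⁻¹
    simpa [dslope_of_ne f htx, slope_def_module, smul_smul, pow_succ', h0, ← mul_assoc] using htail

lemma continuousOn_dslope_of_differentiableAt {s : Set 𝕜}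
    (hf : ∀ t ∈ s, DifferentiableAt 𝕜 f t) : ContinuousOn (dslope f x) s := by
  intro t ht
  rcases eq_or_ne t x with rfl | htx
  · exact (continuousAt_dslope_same.2 (hf t ht)).continuousWithinAt
  · exact ((continuousAt_dslope_of_ne htx).2 (hf t ht).continuousAt).continuousWithinAt

end Dslope

lemma capD_of_neg {γ : ℝ} (hγ : γ < 0) (a : ℝ) (f : ℝ → ℝ) (x : ℝ) :
    capD a γ f x = (Gamma (-γ))⁻¹ * ∫ t in a..x, (x - t) ^ (-γ - 1) * f t := by
  rw [capD, if_pos hγ.le, rlI, if_neg (neg_ne_zero.2 hγ.ne)]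

lemma capD_of_pos_of_lt_one {γ : ℝ} (hγ0 : 0 < γ) (hγ1 : γ < 1) (a : ℝ) (f : ℝ → ℝ) (x : ℝ) :
    capD a γ f x = (Gamma (1 - γ))⁻¹ * ∫ t in a..x, (x - t) ^ (-γ) * deriv f t := by
  rw [capD, if_neg hγ0.not_ge, rlI, if_neg (sub_pos.2 hγ1).ne', sub_sub_cancel_left]

lemma genBinom_succ_mul_capD {α : ℝ} (hα : α < 1) (a : ℝ) (g : ℝ → ℝ) (x : ℝ) (n : ℕ) :
    genBinom α (n + 1) * capD a (α - (n + 1 : ℕ)) g x =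
      α * (Gamma (1 - α))⁻¹ * (((n + 1)! : ℝ)⁻¹ *
        ∫ t in a..x, (t - x) ^ n * ((x - t) ^ (-α) * g t)) := by
  have hneg : α - (n + 1 : ℕ) < 0 := by
    push_cast
    linarith [n.cast_nonneg (α := ℝ)]
  have hker : ∫ t in a..x, (x - t) ^ (-(α - (n + 1 : ℕ)) - 1) * g t =
      (-1) ^ n * ∫ t in a..x, (t - x) ^ n * ((x - t) ^ (-α) * g t) := by
    rw [← intervalIntegral.integral_const_mul]
    refine intervalIntegral.integral_congr_ae ?_
    filter_upwards [Measure.ae_ne volume x] with t htx _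
    have hexp : -(α - (n + 1 : ℕ)) - 1 = -α + n := by
      push_cast
      ring
    rw [hexp, Real.rpow_add_natCast (sub_ne_zero.2 htx.symm), ← neg_sub t x, neg_pow (t - x)]
    ring
  have hcoeff := genBinom_mul_inv_Gamma α (n + 1)
  rw [inv_Gamma_eq_mul_inv_Gamma_add_one (-α), neg_add_eq_sub] at hcoeff
  have hsign : ((-1 : ℝ) ^ n) * (-1) ^ n = 1 := by
    rw [← mul_pow, neg_one_mul, neg_neg, one_pow]
  rw [capD_of_neg hneg, hker, neg_sub, ← mul_assoc, hcoeff, pow_succ]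
  linear_combination α * (Gamma (1 - α))⁻¹ * ((n + 1)! : ℝ)⁻¹ *
    (∫ t in a..x, (t - x) ^ n * ((x - t) ^ (-α) * g t)) * hsign

section

variable {a x α : ℝ} {f g : ℝ → ℝ}

lemma integral_sub_rpow_mul_deriv_sub_const_mul (hax : a < x) (hα : α < 1)
    (hf : ∀ t ∈ Icc a x, DifferentiableAt ℝ f t) (hg : ContinuousOn g (Icc a x)) {u' : ℝ → ℝ}
    (hu : ∀ t ∈ Ioo a x, HasDerivAt (fun s => (f s - f x) * g s) (u' t) t)
    (hu' : IntervalIntegrable (fun t => (x - t) ^ (-α) * u' t) volume a x) :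
    ∫ t in a..x, (x - t) ^ (-α) * u' t = g a * (f x - f a) * (x - a) ^ (-α) +
      α * ∫ t in a..x, dslope f x t * ((x - t) ^ (-α) * g t) := by
  have hslope : ∀ t, (f t - f x) * g t = (x - t) * -(dslope f x t * g t) := by
    intro t
    linear_combination -g t * sub_smul_dslope f x t
  simp only [hslope] at hu
  rw [integral_sub_rpow_mul_deriv_sub_mul hax.le (by linarith)
    ((continuousOn_dslope_of_differentiableAt hf).fun_mul hg).fun_neg hu hu']
  have hboundary : (x - a) ^ (-α + 1) * -(dslope f x a * g a) =
      (x - a) ^ (-α) * ((f a - f x) * g a) := by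
    rw [Real.rpow_add_one (sub_pos.2 hax).ne', mul_assoc, hslope]
  have hneg : ∫ t in a..x, (x - t) ^ (-α) * -(dslope f x t * g t) =
      -∫ t in a..x, dslope f x t * ((x - t) ^ (-α) * g t) := by
    rw [← intervalIntegral.integral_neg]
    congr 1 with t
    ring
  rw [hboundary, hneg]
  ring

lemma integral_sub_rpow_mul_deriv_mul (hax : a < x) (hα : α < 1)
    (hf : ∀ t ∈ Icc a x, DifferentiableAt ℝ f t)
    (hf' : IntervalIntegrable (fun t => (x - t) ^ (-α) * deriv f t) volume a x)
    (hgc : ContinuousOn g (Icc a x)) (hgd : ∀ t ∈ Ioo a x, DifferentiableAt ℝ g t)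
    (hg' : IntervalIntegrable (fun t => (x - t) ^ (-α) * deriv g t) volume a x) :
    ∫ t in a..x, (x - t) ^ (-α) * deriv (fun s => f s * g s) t =
      f x * (∫ t in a..x, (x - t) ^ (-α) * deriv g t) + g a * (f x - f a) * (x - a) ^ (-α) +
        α * ∫ t in a..x, dslope f x t * ((x - t) ^ (-α) * g t) := by
  have hIcc : uIcc a x = Icc a x := uIcc_of_le hax.le
  set u' : ℝ → ℝ := fun t => deriv f t * g t + (f t - f x) * deriv g t with hu'_def
  have hu : ∀ t ∈ Ioo a x, HasDerivAt (fun s => (f s - f x) * g s) (u' t) t := fun t ht =>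
    ((hf t (Ioo_subset_Icc_self ht)).hasDerivAt.sub_const (f x)).mul (hgd t ht).hasDerivAt
  have hu' : IntervalIntegrable (fun t => (x - t) ^ (-α) * u' t) volume a x := by
    have hfc : ContinuousOn (fun t => f t - f x) (uIcc a x) := fun t ht =>
      ((hf t (hIcc ▸ ht)).sub_const (f x)).continuousAt.continuousWithinAt
    refine ((hf'.mul_continuousOn (hIcc ▸ hgc)).add (hg'.continuousOn_mul hfc)).congr ?_
    intro t _
    simp only [hu'_def]
    ring
  have hsplit : ∫ t in a..x, (x - t) ^ (-α) * deriv (fun s => f s * g s) t =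
      f x * (∫ t in a..x, (x - t) ^ (-α) * deriv g t) + ∫ t in a..x, (x - t) ^ (-α) * u' t := by
    rw [← intervalIntegral.integral_const_mul,
      ← intervalIntegral.integral_add (hg'.const_mul _) hu']
    refine intervalIntegral.integral_congr_Ioo_of_le hax.le fun t ht => ?_
    simp only [hu'_def, deriv_fun_mul (hf t (Ioo_subset_Icc_self ht)) (hgd t ht)]
    ring
  rw [hsplit, integral_sub_rpow_mul_deriv_sub_const_mul hax hα hf hgc hu hu', add_assoc]

lemma hasSum_genBinom_succ_mul_capD (hα : α < 1)
    (hf : ∀ t ∈ uIcc a x, HasSum (fun n => (t - x) ^ n • (n ! : ℝ)⁻¹ • iteratedDeriv n f x) (f t))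
    (hg : ContinuousOn g (uIcc a x)) :
    HasSum (fun n : ℕ =>
        genBinom α (n + 1) * iteratedDeriv (n + 1) f x * capD a (α - (n + 1 : ℕ)) g x)
      (α * (Gamma (1 - α))⁻¹ * ∫ t in a..x, dslope f x t * ((x - t) ^ (-α) * g t)) := by
  have hw := (intervalIntegrable_sub_rpow (r := -α) (by linarith) a x x).mul_continuousOn hg
  have hterm := (hasSum_integral_sub_pow_smul hw
    fun t ht => hasSum_taylor_dslope (hf t ht)).mul_left (α * (Gamma (1 - α))⁻¹)
  simp only [smul_eq_mul] at hterm
  refine hterm.congr_fun fun n => ?_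
  linear_combination iteratedDeriv (n + 1) f x * genBinom_succ_mul_capD hα a g x n

theorem leibniz_classical_Caputo_general {p : FormalMultilinearSeries ℝ ℝ ℝ} {r : ENNReal}
    (hax : a < x) (hα0 : 0 < α) (hα1 : α < 1)
    (hf : HasFPowerSeriesOnBall f p x r) (hr : ENNReal.ofReal (x - a) < r)
    (hgc : ContinuousOn g (Icc a x)) (hgd : ∀ t ∈ Ioo a x, DifferentiableAt ℝ g t)
    (hg' : IntervalIntegrable (fun t => (x - t) ^ (-α) * deriv g t) volume a x) :
    HasSum
      (fun m : ℕ => genBinom α m * iteratedDeriv m f x * capD a (α - m) g x)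
      (capD a α (fun t => f t * g t) x -
        g a * (f x - f a) * (x - a) ^ (-α) / Gamma (1 - α)) := by
  have hIcc : uIcc a x = Icc a x := uIcc_of_le hax.le
  have hball : Icc a x ⊆ Metric.eball x r := by
    intro t ht
    rw [Metric.mem_eball, edist_comm, edist_dist, Real.dist_eq, abs_of_nonneg (sub_nonneg.2 ht.2)]
    exact (ENNReal.ofReal_le_ofReal (by linarith [ht.1])).trans_lt hr
  have hfan : AnalyticOnNhd ℝ f (Icc a x) := hf.analyticOnNhd.mono hball
  have hf' : IntervalIntegrable (fun t => (x - t) ^ (-α) * deriv f t) volume a x :=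
    (intervalIntegrable_sub_rpow (by linarith) a x x).mul_continuousOn
      (hIcc ▸ hfan.deriv.continuousOn)
  have hprod := integral_sub_rpow_mul_deriv_mul hax hα1
    (fun t ht => (hfan t ht).differentiableAt) hf' hgc hgd hg'
  have hvalue : capD a α (fun t => f t * g t) x -
      g a * (f x - f a) * (x - a) ^ (-α) / Gamma (1 - α) -
        genBinom α 0 * iteratedDeriv 0 f x * capD a (α - (0 : ℕ)) g x =
      α * (Gamma (1 - α))⁻¹ * ∫ t in a..x, dslope f x t * ((x - t) ^ (-α) * g t) := by
    rw [genBinom_zero, iteratedDeriv_zero, Nat.cast_zero, sub_zero,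
      capD_of_pos_of_lt_one hα0 hα1, capD_of_pos_of_lt_one hα0 hα1, hprod]
    ring
  rw [← hasSum_nat_add_iff' 1, Finset.sum_range_one, hvalue]
  exact hasSum_genBinom_succ_mul_capD hα1
    (fun t ht => hasSum_taylor_of_hasFPowerSeriesOnBall hf (hball (hIcc ▸ ht))) (hIcc.symm ▸ hgc)

end

lemma EntireReal.exists_hasFPowerSeriesOnBall {h : ℝ → ℝ} (hh : EntireReal h) (x : ℝ) :
    ∃ p : FormalMultilinearSeries ℝ ℝ ℝ, HasFPowerSeriesOnBall h p x ⊤ := by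
  obtain ⟨p, hp⟩ := hh
  exact ⟨p.changeOrigin x, by simpa using hp.changeOrigin (y := x) (by simp)⟩

lemma EntireReal.contDiff {h : ℝ → ℝ} (hh : EntireReal h) {n : WithTop ℕ∞} : ContDiff ℝ n h := by
  obtain ⟨p, hp⟩ := hh
  exact contDiff_iff_contDiffAt.2 fun x => (hp.analyticOnNhd x (by simp)).contDiffAt

end

/-- Leibniz type rule for the classical Caputo fractional derivative. -/
theorem leibniz_classical_Caputo
    (a b : ℝ) (hab : a < b) (α : ℝ) (hα0 : 0 < α) (hα1 : α < 1)
    (f g : ℝ → ℝ) (hf : EntireReal f) (hg : EntireReal g)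
    (x : ℝ) (hx : x ∈ Set.Ioo a b) :
    HasSum
      (fun m : ℕ => genBinom α m * iteratedDeriv m f x * capD a (α - m) g x)
      (capD a α (fun t => f t * g t) x -
        g a * (f x - f a) * (x - a) ^ (-α) / Real.Gamma (1 - α)) := by
  obtain ⟨p, hp⟩ := hf.exists_hasFPowerSeriesOnBall x
  have hg1 : ContDiff ℝ 1 g := hg.contDiff
  exact leibniz_classical_Caputo_general hx.1 hα0 hα1 hp ENNReal.ofReal_lt_top
    hg1.continuous.continuousOn (fun t _ => hg1.differentiable one_ne_zero t)
    ((intervalIntegrable_sub_rpow (by linarith) a x x).mul_continuousOn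
      (hg1.continuous_deriv le_rfl).continuousOn)
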